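/- The posets NC(U_{m,n}), NC(V_{m,n}), and NC(S_{m,n}) are rank-symmetric: writing P for the corresponding configuration, ρ(π) = |P| − (number of blocks of π), and h = |P| − 1 for the height, for every k ∈ {0, …, h} the number of noncrossing partitions π of P with ρ(π) = k equals the number of noncrossing partitions π of P with ρ(π) = h − k. -/

import Mathlib

open Finset

/-- A finpartition of a finite set of points in the plane is *noncrossing* if the
convex hulls (over `ℝ`) of its blocks are pairwise disjoint. -/
def IsNoncrossing {P : Finset ℂ} (π : Finpartition P) : Prop :=
  (π.parts : Set (Finset ℂ)).Pairwise fun B₁ B₂ =>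
    Disjoint (convexHull ℝ (B₁ : Set ℂ)) (convexHull ℝ (B₂ : Set ℂ))

/-- The poset `NC(P)` of noncrossing partitions of `P`, ordered by refinement:
`π ≤ μ` iff every block of `μ` is a union of blocks of `π`. -/
abbrev NC (P : Finset ℂ) : Type := {π : Finpartition P // IsNoncrossing π}

/-- The blocks of a noncrossing partition. -/
def NC.parts {P : Finset ℂ} (π : NC P) : Finset (Finset ℂ) := π.1.parts

/-- Two points lie in a common block of a noncrossing partition. -/
def NC.SameBlock {P : Finset ℂ} (π : NC P) (a b : ℂ) : Prop :=
  ∃ B ∈ π.parts, a ∈ B ∧ b ∈ B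

/-- The open cone configuration `U_{m,n} = {1, …, m} ∪ {i, 2i, …, ni} ⊆ ℂ`. -/
noncomputable def Uconfig (m n : ℕ) : Finset ℂ :=
  ((Finset.Icc 1 m).image fun j : ℕ => (j : ℂ)) ∪
    ((Finset.Icc 1 n).image fun k : ℕ => (k : ℂ) * Complex.I)

/-- The closed cone configuration `V_{m,n} = U_{m,n} ∪ {0}`. -/
noncomputable def Vconfig (m n : ℕ) : Finset ℂ := insert 0 (Uconfig m n)

/-- The real point `x_k = -1 + 2k/(m+1)` of the semicircular configuration `S_{m,n}`. -/
noncomputable def Sx (m k : ℕ) : ℂ := -1 + 2 * (k : ℂ) / ((m : ℂ) + 1)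

/-- The circle point `y_j = exp(iπj/(n+1))` of the semicircular configuration `S_{m,n}`. -/
noncomputable def Sy (n j : ℕ) : ℂ :=
  Complex.exp ((Real.pi : ℂ) * (j : ℂ) / ((n : ℂ) + 1) * Complex.I)

/-- The semicircular configuration `S_{m,n}`: the `m+2` real points
`x_k = -1 + 2k/(m+1)` for `k = 0, …, m+1` (including the endpoints `±1`) together
with the `n` points `y_j = exp(iπj/(n+1))` for `j = 1, …, n` on the open upper
unit semicircle. -/
noncomputable def Sconfig (m n : ℕ) : Finset ℂ :=
  ((Finset.range (m + 2)).image fun k : ℕ => Sx m k) ∪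
    ((Finset.Icc 1 n).image fun j : ℕ => Sy n j)

namespace NCsym

/-! ### Orientation and the abstract geometric configuration -/

def ori (a b c : ℂ) : ℝ :=
  (b.re - a.re) * (c.im - a.im) - (b.im - a.im) * (c.re - a.re)

structure Conf (p : ℕ → ℂ) (a s N : ℕ) : Prop where
  ha : a ≤ N
  hs : a ≤ s + 1
  pos : ∀ i j k, i < j → j < k → k ≤ N → ¬ (k < a) → ¬ (s ≤ i ∧ k < N) →
    0 < ori (p i) (p j) (p k)
  seg1 : ∀ i j k, i < j → j < k → k < a → p j ∈ segment ℝ (p i) (p k)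
  seg2 : ∀ i j k, i < j → j < k → k < N → s ≤ i → p j ∈ segment ℝ (p i) (p k)

structure Good (a s : ℕ) (f : ℕ → ℕ) : Prop where
  le : ∀ i, f i ≤ i
  nc : ∀ i j, i < j → f j ≤ i → f j ≤ f i
  r1 : ∀ i j k, i < j → j < k → k < a → f i = f k → f j = f i
  r2 : ∀ i j k, i < j → j < k → s ≤ i → f i = f k → f j = f i

lemma Good.idem {a s : ℕ} {f : ℕ → ℕ} (h : Good a s f) (i : ℕ) : f (f i) = f i := by
  rcases (h.le i).lt_or_eq with h1 | h1
  · exact le_antisymm (h.le _) (h.nc _ _ h1 le_rfl)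
  · rw [h1, h1]

lemma ori_of_seg {x y z : ℂ} (h : y ∈ segment ℝ x z) : ori x y z = 0 := by
  obtain ⟨u, v, hu, hv, huv, rfl⟩ := h
  have : u = 1 - v := by linarith
  subst this
  simp [ori]
  ring

lemma convex_pos (q r : ℂ) : Convex ℝ {z | 0 < ori q r z} := by
  intro x hx y hy u v hu hv huv
  simp only [Set.mem_ofPred_eq] at *
  have h : ori q r (u • x + v • y) = u * ori q r x + v * ori q r y := by
    have : u = 1 - v := by linarith
    subst this
    simp [ori]
    ring
  rw [h]
  rcases hu.lt_or_eq with h0 | h0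
  · have := mul_pos h0 hx
    have := mul_nonneg hv hy.le
    linarith
  · have : v = 1 := by linarith
    subst this
    rw [← h0]; linarith

lemma convex_neg (q r : ℂ) : Convex ℝ {z | ori q r z < 0} := by
  have h : {z | ori q r z < 0} = {z | 0 < ori r q z} := by
    ext z
    simp only [Set.mem_ofPred_eq]
    have : ori r q z = - ori q r z := by simp [ori]; ring
    rw [this]; constructor <;> intro h <;> linarith
  rw [h]; exact convex_pos _ _

variable {p : ℕ → ℂ} {a s N : ℕ}

lemma Conf.nonneg (h : Conf p a s N) {i j k : ℕ} (hij : i ≤ j) (hjk : j ≤ k) (hk : k ≤ N) :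
    0 ≤ ori (p i) (p j) (p k) := by
  rcases hij.lt_or_eq with hij | rfl
  · rcases hjk.lt_or_eq with hjk | rfl
    · by_cases h1 : k < a
      · rw [ori_of_seg (h.seg1 _ _ _ hij hjk h1)]
      · by_cases h2 : s ≤ i ∧ k < N
        · rw [ori_of_seg (h.seg2 _ _ _ hij hjk h2.2 h2.1)]
        · exact (h.pos _ _ _ hij hjk hk h1 h2).le
    · simp [ori]; linarith
  · simp [ori]

lemma Conf.inj (h : Conf p a s N) {i j : ℕ} (hi : i < N) (hj : j < N) (hp : p i = p j) : i = j := by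
  by_contra hne
  rcases lt_or_gt_of_ne hne with hlt | hlt
  · have := h.pos i j N hlt hj le_rfl (by have := h.ha; omega) (by omega)
    rw [hp] at this; simp [ori] at this
  · have := h.pos j i N hlt hi le_rfl (by have := h.ha; omega) (by omega)
    rw [hp] at this; simp [ori] at this

lemma Conf.cross (h : Conf p a s N) {i j k l : ℕ} (hij : i < j) (hjk : j < k) (hkl : k < l)
    (hl : l < N) : ∃ z, z ∈ segment ℝ (p i) (p k) ∧ z ∈ segment ℝ (p j) (p l) := by
  have e1 := h.nonneg hij.le hjk.le (by omega)
  have e2 := h.nonneg hij.le (hjk.trans hkl).le (by omega)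
  have e3 := h.nonneg (hij.trans hjk).le hkl.le (by omega)
  have e4 := h.nonneg hjk.le hkl.le (by omega)
  by_cases hz : ori (p j) (p k) (p l) + ori (p i) (p j) (p l) = 0
  · have hsum : ori (p j) (p k) (p l) + ori (p i) (p j) (p l)
        = ori (p i) (p k) (p l) + ori (p i) (p j) (p k) := by simp [ori]; ring
    have h0 : ori (p i) (p j) (p k) = 0 := by linarith
    refine ⟨p j, ?_, left_mem_segment _ _ _⟩
    by_cases h1 : k < a
    · exact h.seg1 _ _ _ hij hjk h1
    · by_cases h2 : s ≤ i ∧ k < N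
      · exact h.seg2 _ _ _ hij hjk h2.2 h2.1
      · exact absurd h0 (h.pos _ _ _ hij hjk (by omega) h1 h2).ne'
  · set S := ori (p j) (p k) (p l) + ori (p i) (p j) (p l) with hS
    have hpos : 0 < S := lt_of_le_of_ne (by linarith) (Ne.symm hz)
    have hsum : S = ori (p i) (p k) (p l) + ori (p i) (p j) (p k) := by
      rw [hS]; simp [ori]; ring
    refine ⟨(ori (p j) (p k) (p l) / S) • p i + (ori (p i) (p j) (p l) / S) • p k,
      ⟨_, _, by positivity, by positivity, ?_, rfl⟩,
      ⟨ori (p i) (p k) (p l) / S, ori (p i) (p j) (p k) / S, by positivity, by positivity, ?_, ?_⟩⟩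
    · rw [← add_div, ← hS]; exact div_self hpos.ne'
    · rw [← add_div, ← hsum]; exact div_self hpos.ne'
    · apply Complex.ext
      · simp only [Complex.add_re, Complex.real_smul, Complex.mul_re, Complex.ofReal_re,
          Complex.ofReal_im, zero_mul, sub_zero]
        field_simp
        simp only [ori]; ring
      · simp only [Complex.add_im, Complex.real_smul, Complex.mul_im, Complex.ofReal_re,
          Complex.ofReal_im, zero_mul, add_zero]
        field_simp
        simp only [ori]; ring

lemma ori_mid (x x' y y' z : ℂ) : ori ((x + x') / 2) ((y + y') / 2) z =
    (ori x y z + ori x y' z + ori x' y z + ori x' y' z) / 4 := by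
  have e1 : ((x + x') / 2).re = (x.re + x'.re) / 2 := by simp
  have e2 : ((x + x') / 2).im = (x.im + x'.im) / 2 := by simp
  have e3 : ((y + y') / 2).re = (y.re + y'.re) / 2 := by simp
  have e4 : ((y + y') / 2).im = (y.im + y'.im) / 2 := by simp
  unfold ori
  rw [e1, e2, e3, e4]; ring

lemma ori_rot (x y z : ℂ) : ori x y z = ori z x y := by simp [ori]; ring
lemma ori_swap (x y z : ℂ) : ori x y z = - ori x z y := by simp [ori]; ring

lemma Conf.sep (h : Conf p a s N) {i j : ℕ} (hij : i + 1 < j) (hj : j ≤ N)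
    (hb1 : ¬ j < a) (hb2 : ¬ (s ≤ i ∧ j < N)) :
    ∃ q r : ℂ, (∀ k, i < k → k < j → ori q r (p k) < 0) ∧
      (∀ k, k < N → (k ≤ i ∨ j ≤ k) → 0 < ori q r (p k)) := by
  obtain ⟨j, rfl⟩ : ∃ j', j = j' + 1 := ⟨j - 1, by omega⟩
  refine ⟨(p i + p (i+1)) / 2, (p j + p (j+1)) / 2, ?_, ?_⟩
  · intro k h1 h2
    rw [ori_mid, ori_swap (p i) (p j), ori_swap (p i) (p (j+1)), ori_swap (p (i+1)) (p j),
      ori_swap (p (i+1)) (p (j+1))]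
    have a1 := h.nonneg (i := i) (j := k) (k := j) (by omega) (by omega) (by omega)
    have a2 := h.pos i k (j+1) (by omega) (by omega) (by omega) hb1 hb2
    have a3 := h.nonneg (i := i+1) (j := k) (k := j) (by omega) (by omega) (by omega)
    have a4 := h.nonneg (i := i+1) (j := k) (k := j+1) (by omega) (by omega) (by omega)
    linarith
  · rintro k hk (hk1 | hk1)
    · rw [ori_mid, ori_rot (p i) (p j), ori_rot (p i) (p (j+1)), ori_rot (p (i+1)) (p j),
        ori_rot (p (i+1)) (p (j+1))]
      have a1 := h.nonneg (i := k) (j := i) (k := j) (by omega) (by omega) (by omega)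
      have a2 := h.nonneg (i := k) (j := i) (k := j+1) (by omega) (by omega) (by omega)
      have a3 := h.nonneg (i := k) (j := i+1) (k := j) (by omega) (by omega) (by omega)
      have a4 := h.pos k (i+1) (j+1) (by omega) (by omega) (by omega) hb1 (by omega)
      linarith
    · rw [ori_mid]
      have a1 := h.pos i j k (by omega) (by omega) (by omega) (by omega) (by omega)
      have a2 := h.nonneg (i := i) (j := j+1) (k := k) (by omega) (by omega) (by omega)
      have a3 := h.nonneg (i := i+1) (j := j) (k := k) (by omega) (by omega) (by omega)
      have a4 := h.nonneg (i := i+1) (j := j+1) (k := k) (by omega) (by omega) (by omega)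
      linarith

/-- The block of `p`-points with label `c`. -/
noncomputable def blk (p : ℕ → ℂ) (N : ℕ) (f : ℕ → ℕ) (c : ℕ) : Finset ℂ :=
  ((Finset.range N).filter (fun i => f i = c)).image p

lemma mem_blk {f : ℕ → ℕ} {c i : ℕ} (hi : i < N) (hc : f i = c) : p i ∈ blk p N f c := by
  simp only [blk, Finset.mem_image, Finset.mem_filter, Finset.mem_range]
  exact ⟨i, ⟨hi, hc⟩, rfl⟩

lemma disj_aux (h : Conf p a s N) {f : ℕ → ℕ} (hf : Good a s f) {c d : ℕ} (hcd : c < d) (hd : d < N)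
    (hfc : f c = c) (hfd : f d = d) :
    Disjoint (convexHull ℝ (blk p N f c : Set ℂ)) (convexHull ℝ (blk p N f d : Set ℂ)) := by
  -- predecessor
  obtain ⟨α, hα⟩ : ∃ α, Maximal (fun x => x < d ∧ f x = c) α := by
    have : ((Finset.range d).filter (fun x => f x = c)).Nonempty := ⟨c, by simp [hcd, hfc]⟩
    obtain ⟨x, hx, hx2⟩ := Finset.exists_max_image _ id this
    refine ⟨x, by simpa using hx, ?_⟩
    intro y hy hxy
    exact hx2 y (by simpa using hy)
  obtain ⟨⟨hα1, hα2⟩, hα3⟩ := hα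
  obtain ⟨β, hβ1, hβ2, hβ3, hβ4⟩ : ∃ β, d < β ∧ β ≤ N ∧ (β < N → f β = c) ∧
      ∀ x, d < x → x < β → f x ≠ c := by
    by_cases hex : ∃ x, d < x ∧ x < N ∧ f x = c
    · classical
      refine ⟨Nat.find hex, (Nat.find_spec hex).1, (Nat.find_spec hex).2.1.le,
        fun _ => (Nat.find_spec hex).2.2, ?_⟩
      intro x h1 h2 h3
      exact Nat.find_min hex h2 ⟨h1, h2.trans (Nat.find_spec hex).2.1, h3⟩
    · push Not at hex
      exact ⟨N, hd, le_rfl, fun h => absurd h (lt_irrefl _), fun x h1 h2 => hex x h1 h2⟩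
  have hne : f d ≠ c := by omega
  obtain ⟨q, r, hn, hp⟩ := h.sep (i := α) (j := β) (by omega) hβ2 (by
      intro hlt
      have := hf.r1 α d β hα1 hβ1 hlt (by rw [hα2, hβ3 (by have := h.ha; omega)])
      omega) (by
      rintro ⟨h1, h2⟩
      have := hf.r2 α d β hα1 hβ1 h1 (by rw [hα2, hβ3 h2])
      omega)
  have hA : convexHull ℝ (blk p N f c : Set ℂ) ⊆ {z | 0 < ori q r z} := by
    apply convexHull_min _ (convex_pos _ _)
    intro z hz
    simp only [blk, Finset.coe_image, Finset.coe_filter, Finset.mem_range, Set.mem_image,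
      Set.mem_ofPred_eq] at hz
    obtain ⟨x, ⟨hx, hxc⟩, rfl⟩ := hz
    apply hp x hx
    by_contra hcon
    push Not at hcon
    rcases lt_trichotomy x d with h1 | h1 | h1
    · have : x ≤ α := hα3 ⟨h1, hxc⟩ hcon.1.le
      omega
    · subst h1; exact hne hxc
    · exact hβ4 x h1 hcon.2 hxc
  have hB : convexHull ℝ (blk p N f d : Set ℂ) ⊆ {z | ori q r z < 0} := by
    apply convexHull_min _ (convex_neg _ _)
    intro z hz
    simp only [blk, Finset.coe_image, Finset.coe_filter, Finset.mem_range, Set.mem_image,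
      Set.mem_ofPred_eq] at hz
    obtain ⟨x, ⟨hx, hxc⟩, rfl⟩ := hz
    have hdx : d ≤ x := by have := hf.le x; omega
    apply hn x (by omega)
    by_contra hcon
    push Not at hcon
    rcases hcon.lt_or_eq with h1 | h1
    · have := hf.nc β x h1 (by omega)
      rw [hβ3 (by omega)] at this; omega
    · subst h1; rw [hβ3 hx] at hxc; omega
  refine Set.disjoint_left.2 fun z h1 h2 => ?_
  have h1 := hA h1
  have h2 := hB h2
  simp only [Set.mem_ofPred_eq] at h1 h2
  linarith

lemma disj_of_good (h : Conf p a s N) {f : ℕ → ℕ} (hf : Good a s f) {c d : ℕ} (hcd : c ≠ d)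
    (hc : c < N) (hd : d < N) (hfc : f c = c) (hfd : f d = d) :
    Disjoint (convexHull ℝ (blk p N f c : Set ℂ)) (convexHull ℝ (blk p N f d : Set ℂ)) := by
  rcases lt_or_gt_of_ne hcd with h1 | h1
  · exact disj_aux h hf h1 hd hfc hfd
  · exact (disj_aux h hf h1 hc hfd hfc).symm

lemma good_of_disj (h : Conf p a s N) {f : ℕ → ℕ} (hle : ∀ i, f i ≤ i) (hid : ∀ i, f (f i) = f i)
    (hsupp : ∀ i, N ≤ i → f i = i)
    (hd : ∀ c d, c ≠ d → c < N → d < N → f c = c → f d = d →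
      Disjoint (convexHull ℝ (blk p N f c : Set ℂ)) (convexHull ℝ (blk p N f d : Set ℂ))) :
    Good a s f := by
  have key : ∀ i j k, i < j → j < k → k < N → f i = f k → p j ∈ segment ℝ (p i) (p k) →
      f j = f i := by
    intro i j k hij hjk hk he hseg
    by_contra hne
    have hi := hle i
    have hj := hle j
    refine (Set.disjoint_left.1 (hd (f i) (f j) (Ne.symm hne) (by omega) (by omega) (hid _) (hid _)))
      (show p j ∈ _ from ?_) ?_
    · exact segment_subset_convexHull (mem_blk (by omega) rfl) (mem_blk (by omega) he.symm) hseg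
    · exact subset_convexHull ℝ _ (mem_blk (by omega) rfl)
  refine ⟨hle, ?_, ?_, ?_⟩
  · intro i j hij hji
    by_contra hlt
    push Not at hlt
    have hj : j < N := by
      by_contra hcon
      have := hsupp j (by omega)
      omega
    have hne : f j ≠ i := by
      intro he
      have := hid j
      rw [he] at this; omega
    obtain ⟨z, hz1, hz2⟩ := h.cross hlt (by omega : f j < i) hij hj
    refine (Set.disjoint_left.1 (hd (f i) (f j) (by omega) (by omega) (by omega) (hid _) (hid _)))
      (show z ∈ _ from ?_) ?_
    · exact segment_subset_convexHull (mem_blk (by omega) (hid _)) (mem_blk (by omega) rfl) hz1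
    · exact segment_subset_convexHull (mem_blk (by omega) (hid _)) (mem_blk (by omega) rfl) hz2
  · intro i j k hij hjk hk he
    exact key i j k hij hjk (by have := h.ha; omega) he (h.seg1 _ _ _ hij hjk hk)
  · intro i j k hij hjk hk he
    have hkN : k < N := by
      by_contra hcon
      have := hsupp k (by omega)
      have := hle i
      omega
    exact key i j k hij hjk hkN he (h.seg2 _ _ _ hij hjk hkN hk)

/-! ### Encoding of partitions by their minimum functions -/

open Classical in
noncomputable def allowed (a s N : ℕ) (f : ℕ → ℕ) : Finset ℕ :=
  (Finset.range (N + 1)).filter (fun k => Good a s (Function.update f N k))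

open Classical in
noncomputable def FF (a s : ℕ) : ℕ → Finset (ℕ → ℕ)
  | 0 => {id}
  | N + 1 => (FF a s N).biUnion fun f => (allowed a s N f).image (Function.update f N)

def fixn (N : ℕ) (f : ℕ → ℕ) : ℕ := ((Finset.range N).filter (fun i => f i = i)).card

lemma good_restrict {f : ℕ → ℕ} (hf : Good a s f) (hs : ∀ i, N + 1 ≤ i → f i = i) :
    Good a s (Function.update f N N) := by
  have hle := hf.le
  have hval : ∀ i, (i < N ∧ Function.update f N N i = f i) ∨
      (N ≤ i ∧ Function.update f N N i = i) := by
    intro i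
    rcases lt_trichotomy i N with h | h | h
    · left; exact ⟨h, by simp [Function.update, h.ne]⟩
    · right; exact ⟨h.ge, by simp [h]⟩
    · right; refine ⟨h.le, ?_⟩
      rw [Function.update_of_ne (by omega)]; exact hs i h
  refine ⟨?_, ?_, ?_, ?_⟩
  · intro i; have := hval i; have := hle i; omega
  · intro i j hij hji
    have h1 := hval i; have h2 := hval j
    have h3 := hf.nc i j hij
    omega
  · intro i j k hij hjk hk he
    have h1 := hval i; have h2 := hval j; have h3 := hval k
    have h4 := hf.r1 i j k hij hjk hk
    have := hle i
    omega
  · intro i j k hij hjk hk he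
    have h1 := hval i; have h2 := hval j; have h3 := hval k
    have h4 := hf.r2 i j k hij hjk hk
    have := hle i
    omega

lemma mem_FF {f : ℕ → ℕ} : f ∈ FF a s N ↔ Good a s f ∧ ∀ i, N ≤ i → f i = i := by
  induction N generalizing f with
  | zero =>
    simp only [FF, Finset.mem_singleton, Nat.zero_le, forall_const]
    constructor
    · rintro rfl
      refine ⟨⟨fun i => le_rfl, ?_, ?_, ?_⟩, fun i => rfl⟩
      · intro i j h1 h2; simp at h2; omega
      · intro i j k h1 h2 _ h; simp at h; omega
      · intro i j k h1 h2 _ h; simp at h; omega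
    · rintro ⟨_, h⟩; funext i; exact h i
  | succ N ih =>
    simp only [FF, Finset.mem_biUnion, Finset.mem_image]
    constructor
    · rintro ⟨g, hg, k, hk, rfl⟩
      simp only [allowed, Finset.mem_filter] at hk
      refine ⟨hk.2, fun i hi => ?_⟩
      rw [Function.update_of_ne (by omega)]
      exact (ih.1 hg).2 i (by omega)
    · rintro ⟨hf, hs⟩
      refine ⟨Function.update f N N, ih.2 ⟨good_restrict hf hs, ?_⟩, f N, ?_, ?_⟩
      · intro i hi
        by_cases h : i = N
        · simp [h]
        · rw [Function.update_of_ne h]; exact hs i (by omega)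
      · simp only [allowed, Finset.mem_filter, Finset.mem_range, Function.update_idem,
          Function.update_eq_self]
        exact ⟨by have := hf.le N; omega, hf⟩
      · simp

lemma sum_FF_succ {R : Type*} [CommRing R] (g : (ℕ → ℕ) → R) :
    ∑ f ∈ FF a s (N + 1), g f = ∑ f ∈ FF a s N, ∑ k ∈ allowed a s N f, g (Function.update f N k) := by
  classical
  rw [FF, Finset.sum_biUnion]
  · refine Finset.sum_congr rfl fun f hf => ?_
    rw [Finset.sum_image]
    intro k _ l _ h
    have := congrFun h N
    simpa using this
  · intro f hf g hg hne
    rw [Function.onFun, Finset.disjoint_left]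
    intro x hx hx'
    simp only [Finset.mem_image] at hx hx'
    obtain ⟨k, _, rfl⟩ := hx
    obtain ⟨l, _, h⟩ := hx'
    apply hne
    funext i
    by_cases hi : i = N
    · subst hi
      rw [(mem_FF.1 hf).2 _ le_rfl, (mem_FF.1 hg).2 _ le_rfl]
    · have := congrFun h i
      rw [Function.update_of_ne hi, Function.update_of_ne hi] at this
      exact this.symm

noncomputable def pset (p : ℕ → ℂ) (N : ℕ) : Finset ℂ := (Finset.range N).image p

lemma p_mem {i : ℕ} (hi : i < N) : p i ∈ pset p N :=
  Finset.mem_image.2 ⟨i, Finset.mem_range.2 hi, rfl⟩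

open Classical in
noncomputable def fOf (p : ℕ → ℂ) (N : ℕ) (π : Finpartition (pset p N)) (i : ℕ) : ℕ :=
  if i < N then sInf {j | j < N ∧ π.part (p j) = π.part (p i)} else i

lemma fOf_spec (π : Finpartition (pset p N)) {i : ℕ} (hi : i < N) :
    fOf p N π i < N ∧ π.part (p (fOf p N π i)) = π.part (p i) := by
  rw [fOf, if_pos hi]
  exact Nat.sInf_mem (s := {j | j < N ∧ π.part (p j) = π.part (p i)}) ⟨i, hi, rfl⟩

lemma fOf_min (π : Finpartition (pset p N)) {i j : ℕ} (hi : i < N) (hj : j < N)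
    (h : π.part (p j) = π.part (p i)) : fOf p N π i ≤ j := by
  rw [fOf, if_pos hi]
  exact Nat.sInf_le ⟨hj, h⟩

lemma fOf_ge (π : Finpartition (pset p N)) {i : ℕ} (hi : N ≤ i) : fOf p N π i = i := by
  rw [fOf, if_neg (by omega)]

lemma fOf_le (π : Finpartition (pset p N)) (i : ℕ) : fOf p N π i ≤ i := by
  by_cases hi : i < N
  · exact fOf_min π hi hi rfl
  · rw [fOf_ge π (by omega)]

lemma fOf_eq_iff (π : Finpartition (pset p N)) {i j : ℕ} (hi : i < N) (hj : j < N) :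
    fOf p N π i = fOf p N π j ↔ π.part (p i) = π.part (p j) := by
  constructor
  · intro h
    rw [← (fOf_spec π hi).2, h, (fOf_spec π hj).2]
  · intro h
    rw [fOf, fOf, if_pos hi, if_pos hj, h]

lemma fOf_idem (π : Finpartition (pset p N)) (i : ℕ) : fOf p N π (fOf p N π i) = fOf p N π i := by
  by_cases hi : i < N
  · exact (fOf_eq_iff π (fOf_spec π hi).1 hi).2 (fOf_spec π hi).2
  · rw [fOf_ge π (i := i) (by omega), fOf_ge π (by omega)]

lemma part_eq_blk (π : Finpartition (pset p N)) {i : ℕ} (hi : i < N) :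
    π.part (p i) = blk p N (fOf p N π) (fOf p N π i) := by
  ext z
  constructor
  · intro hz
    have hzP := π.part_subset _ hz
    obtain ⟨j, hj, rfl⟩ := Finset.mem_image.1 hzP
    rw [Finset.mem_range] at hj
    exact mem_blk hj ((fOf_eq_iff π hj hi).2
      ((π.mem_part_iff_part_eq_part (p_mem hj) (p_mem hi)).1 hz))
  · intro hz
    simp only [blk, Finset.mem_image, Finset.mem_filter, Finset.mem_range] at hz
    obtain ⟨j, ⟨hj, he⟩, rfl⟩ := hz
    exact (π.mem_part_iff_part_eq_part (p_mem hj) (p_mem hi)).2 ((fOf_eq_iff π hj hi).1 he)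

lemma exists_of_mem_parts (π : Finpartition (pset p N)) {B : Finset ℂ} (hB : B ∈ π.parts) :
    ∃ c, c < N ∧ fOf p N π c = c ∧ B = π.part (p c) := by
  obtain ⟨z, hz, rfl⟩ := π.part_surjOn hB
  obtain ⟨j, hj, rfl⟩ := Finset.mem_image.1 (Finset.mem_coe.1 hz)
  rw [Finset.mem_range] at hj
  exact ⟨_, (fOf_spec π hj).1, fOf_idem π j, (fOf_spec π hj).2.symm⟩

lemma card_parts_eq (π : Finpartition (pset p N)) : π.parts.card = fixn N (fOf p N π) := by
  symm
  refine Finset.card_bij (fun i _ => π.part (p i)) ?_ ?_ ?_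
  · intro i hi
    simp only [Finset.mem_filter, Finset.mem_range] at hi
    exact π.part_mem.2 (p_mem hi.1)
  · intro i hi j hj h
    simp only [Finset.mem_filter, Finset.mem_range] at hi hj
    rw [← hi.2, ← hj.2]
    exact (fOf_eq_iff π hi.1 hj.1).2 h
  · intro B hB
    obtain ⟨c, hc, hf, rfl⟩ := exists_of_mem_parts π hB
    exact ⟨c, by simp [hc, hf], rfl⟩

lemma nc_iff (h : Conf p a s N) (π : Finpartition (pset p N)) :
    IsNoncrossing π ↔ Good a s (fOf p N π) := by
  constructor
  · intro hnc
    refine good_of_disj h (fOf_le π) (fOf_idem π) (fun i hi => fOf_ge π hi) ?_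
    intro c d hcd hc hd hfc hfd
    have e1 := part_eq_blk π hc
    have e2 := part_eq_blk π hd
    rw [hfc] at e1; rw [hfd] at e2
    rw [← e1, ← e2]
    refine hnc (π.part_mem.2 (p_mem hc)) (π.part_mem.2 (p_mem hd)) ?_
    intro he
    have := (fOf_eq_iff π hc hd).2 he
    omega
  · intro hg B hB C hC hne
    obtain ⟨c, hc, hfc, rfl⟩ := exists_of_mem_parts π hB
    obtain ⟨d, hd, hfd, rfl⟩ := exists_of_mem_parts π hC
    have e1 := part_eq_blk π hc
    have e2 := part_eq_blk π hd
    rw [hfc] at e1; rw [hfd] at e2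
    rw [e1, e2]
    exact disj_of_good h hg (by rintro rfl; exact hne rfl) hc hd hfc hfd

lemma fOf_inj {π π' : Finpartition (pset p N)} (h : fOf p N π = fOf p N π') : π = π' := by
  have key : ∀ {π π' : Finpartition (pset p N)}, fOf p N π = fOf p N π' → π.parts ⊆ π'.parts := by
    intro π π' h B hB
    obtain ⟨c, hc, hfc, rfl⟩ := exists_of_mem_parts π hB
    rw [part_eq_blk π hc, h, ← part_eq_blk π' hc]
    exact π'.part_mem.2 (p_mem hc)
  exact Finpartition.ext (Finset.Subset.antisymm (key h) (key h.symm))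

lemma fOf_surj (h : Conf p a s N) {f : ℕ → ℕ} (hf : f ∈ FF a s N) :
    ∃ π : Finpartition (pset p N), fOf p N π = f := by
  classical
  obtain ⟨hg, hs⟩ := mem_FF.1 hf
  let idx : ℂ → ℕ := fun z => sInf {i | i < N ∧ p i = z}
  have hidx : ∀ i, i < N → idx (p i) = i := by
    intro i hi
    have := Nat.sInf_mem (s := {j | j < N ∧ p j = p i}) ⟨i, hi, rfl⟩
    exact h.inj this.1 hi this.2
  let S : Setoid ℂ := Setoid.ker (fun z => f (idx z))
  let π := Finpartition.ofSetSetoid S (pset p N)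
  have hπ : ∀ i j, i < N → j < N → (π.part (p i) = π.part (p j) ↔ f i = f j) := by
    intro i j hi hj
    rw [← π.mem_part_iff_part_eq_part (p_mem hi) (p_mem hj),
      Finpartition.mem_part_ofSetSetoid_iff_rel]
    simp only [p_mem hi, p_mem hj, true_and]
    change f (idx (p j)) = f (idx (p i)) ↔ _
    rw [hidx i hi, hidx j hj]; exact eq_comm
  refine ⟨π, ?_⟩
  funext i
  by_cases hi : i < N
  · have hle := hg.le i
    apply le_antisymm
    · exact fOf_min π hi (by omega) ((hπ _ _ (by omega) hi).2 (hg.idem i))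
    · have h1 := fOf_spec π hi
      rw [hπ _ _ h1.1 hi] at h1
      rw [← h1.2]; exact hg.le _
  · rw [fOf_ge π (by omega), hs i (by omega)]

lemma card_eq (h : Conf p a s N) (j : ℕ) :
    Nat.card {π : NC (pset p N) // π.parts.card = j} =
      ((FF a s N).filter (fun f => fixn N f = j)).card := by
  rw [← Nat.card_eq_finsetCard]
  refine Nat.card_eq_of_bijective (fun x => ⟨fOf p N x.1.1, ?_⟩) ⟨?_, ?_⟩
  · rw [Finset.mem_filter, mem_FF]
    refine ⟨⟨(nc_iff h _).1 x.1.2, fun i hi => fOf_ge _ hi⟩, ?_⟩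
    rw [← card_parts_eq]; exact x.2
  · intro x y hxy
    simp only [Subtype.mk.injEq] at hxy
    exact Subtype.ext (Subtype.ext (fOf_inj hxy))
  · rintro ⟨f, hf⟩
    rw [Finset.mem_filter] at hf
    obtain ⟨π, rfl⟩ := fOf_surj h hf.1
    exact ⟨⟨⟨π, (nc_iff h π).2 (mem_FF.1 hf.1).1⟩, by
      have := card_parts_eq π
      exact this.trans hf.2⟩, rfl⟩

/-! ### The generating tree -/

def Vis (f : ℕ → ℕ) (N : ℕ) : Finset ℕ :=
  (Finset.range N).filter (fun k => ∀ i ∈ Finset.range N, k ≤ i → k ≤ f i)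

def Pur (s : ℕ) (f : ℕ → ℕ) (N : ℕ) : Finset ℕ :=
  (Vis f N).filter (fun k => ∀ i ∈ Finset.range N, s ≤ i → f i ≠ k)

lemma mem_Vis {f : ℕ → ℕ} {k : ℕ} : k ∈ Vis f N ↔ k < N ∧ ∀ i, i < N → k ≤ i → k ≤ f i := by
  simp [Vis]

lemma mem_Pur {f : ℕ → ℕ} {k : ℕ} :
    k ∈ Pur s f N ↔ k ∈ Vis f N ∧ ∀ i, i < N → s ≤ i → f i ≠ k := by
  simp [Pur]

lemma upd_lt {f : ℕ → ℕ} {k i : ℕ} (h : i < N) : Function.update f N k i = f i :=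
  Function.update_of_ne h.ne _ _

lemma upd_self {f : ℕ → ℕ} {k : ℕ} : Function.update f N k N = k := by simp

/-- When may the new point `N` be attached to label `k`? -/
lemma mem_allowed {f : ℕ → ℕ} (hf : f ∈ FF a s N) {k : ℕ} :
    k ∈ allowed a s N f ↔ k = N ∨ (k ∈ Vis f N ∧
      (N < a → ∀ i j, i < j → j < N → f i = k → f j = k) ∧
      (∀ i j, s ≤ i → i < j → j < N → f i = k → f j = k)) := by
  obtain ⟨hg, hs⟩ := mem_FF.1 hf
  simp only [allowed, Finset.mem_filter, Finset.mem_range]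
  constructor
  · rintro ⟨h1, h2⟩
    by_cases hk : k = N
    · exact Or.inl hk
    · right
      refine ⟨mem_Vis.2 ⟨by omega, ?_⟩, ?_, ?_⟩
      · intro i hi hki
        have := h2.nc i N hi
        rw [upd_self, upd_lt hi] at this
        exact this hki
      · intro hN i j hij hj he
        have := h2.r1 i j N hij hj hN
        rw [upd_self, upd_lt hj, upd_lt (hij.trans hj)] at this
        rw [this he, he]
      · intro i j hi hij hj he
        have := h2.r2 i j N hij hj hi
        rw [upd_self, upd_lt hj, upd_lt (hij.trans hj)] at this
        rw [this he, he]
  · rintro (rfl | ⟨hv, h1, h2⟩)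
    · refine ⟨by omega, ?_⟩
      have : Function.update f k k = f := by
        rw [Function.update_eq_self_iff]; exact (hs k le_rfl).symm
      rw [this]; exact hg
    · rw [mem_Vis] at hv
      have hval : ∀ i, (i ≠ N ∧ Function.update f N k i = f i) ∨
          (i = N ∧ Function.update f N k i = k) := by
        intro i
        by_cases h : i = N
        · right; subst h; simp
        · left; exact ⟨h, Function.update_of_ne h _ _⟩
      refine ⟨by omega, ⟨?_, ?_, ?_, ?_⟩⟩
      · intro i; have := hval i; have := hg.le i; omega
      · intro i j hij
        have e1 := hval i; have e2 := hval j; have e3 := hg.nc i j hij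
        have e4 := hs j; have e5 := hv.2 i
        omega
      · intro i j l hij hjl hl
        have e1 := hval i; have e2 := hval j; have e3 := hval l
        have e4 := hg.r1 i j l hij hjl hl
        have e5 := hs l
        have e6 := hg.le i
        have e7 : l = N → f i = k → f j = k := fun hlN =>
          h1 (hlN ▸ hl) i j hij (hlN ▸ hjl)
        omega
      · intro i j l hij hjl hl
        have e1 := hval i; have e2 := hval j; have e3 := hval l
        have e4 := hg.r2 i j l hij hjl hl
        have e5 := hs l
        have e6 := hg.le i
        have e7 : l = N → f i = k → f j = k := fun hlN =>
          h2 i j hl hij (hlN ▸ hjl)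
        omega

lemma top_mem {f : ℕ → ℕ} (hf : f ∈ FF a s (N + 1)) : f N ∈ Vis f (N + 1) := by
  obtain ⟨hg, hs⟩ := mem_FF.1 hf
  have := hg.le N
  refine mem_Vis.2 ⟨by omega, fun i hi hki => ?_⟩
  rcases Nat.lt_succ_iff_lt_or_eq.1 hi with h | rfl
  · exact hg.nc i N h hki
  · exact le_rfl

lemma vis_fix {f : ℕ → ℕ} (hf : f ∈ FF a s N) {k : ℕ} (hk : k ∈ Vis f N) : f k = k := by
  obtain ⟨hg, hs⟩ := mem_FF.1 hf
  rw [mem_Vis] at hk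
  exact le_antisymm (hg.le k) (hk.2 k hk.1 le_rfl)

lemma allowed_zero {f : ℕ → ℕ} (hf : f ∈ FF a s 0) : allowed a s 0 f = {0} := by
  ext k
  rw [mem_allowed hf, mem_Vis, Finset.mem_singleton]
  constructor
  · rintro (h | h)
    · exact h
    · omega
  · intro h; exact Or.inl h

lemma allowed_one {f : ℕ → ℕ} (hf : f ∈ FF a s (N + 1)) (hN : N + 1 < a) (has : a ≤ s + 1) :
    allowed a s (N + 1) f = {N + 1, f N} := by
  obtain ⟨hg, hs⟩ := mem_FF.1 hf
  ext k
  rw [mem_allowed hf, Finset.mem_insert, Finset.mem_singleton]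
  apply or_congr Iff.rfl
  constructor
  · rintro ⟨hv, h1, _⟩
    have hfk := vis_fix hf hv
    rw [mem_Vis] at hv
    by_cases hkN : k = N
    · subst hkN; exact hfk.symm
    · exact (h1 hN k N (by omega) (by omega) hfk).symm
  · rintro rfl
    refine ⟨top_mem hf, ?_, ?_⟩
    · intro _ i j hij hj he
      by_cases hjN : j = N
      · rw [hjN]
      · rw [hg.r1 i j N hij (by omega) (by omega) he, he]
    · intro i j; omega

lemma allowed_two {f : ℕ → ℕ} (hf : f ∈ FF a s N) (hN : a ≤ N) (hs : N ≤ s) :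
    allowed a s N f = insert N (Vis f N) := by
  ext k
  rw [mem_allowed hf, Finset.mem_insert]
  apply or_congr Iff.rfl
  constructor
  · exact fun h => h.1
  · intro h
    exact ⟨h, by omega, fun i j => by omega⟩

lemma allowed_three {f : ℕ → ℕ} (hf : f ∈ FF a s (N + 1)) (hN : a ≤ N + 1) (hsN : s ≤ N) :
    allowed a s (N + 1) f = insert (N + 1) (insert (f N) (Pur s f (N + 1))) := by
  obtain ⟨hg, hs⟩ := mem_FF.1 hf
  ext k
  rw [mem_allowed hf, Finset.mem_insert, Finset.mem_insert]
  apply or_congr Iff.rfl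
  constructor
  · rintro ⟨hv, _, h2⟩
    by_cases hk : k = f N
    · exact Or.inl hk
    · right
      refine mem_Pur.2 ⟨hv, fun i hi hsi he => ?_⟩
      by_cases hiN : i = N
      · subst hiN; exact hk he.symm
      · exact hk (h2 i N hsi (by omega) (by omega) he).symm
  · rintro (rfl | h)
    · refine ⟨top_mem hf, by omega, ?_⟩
      intro i j hi hij hj he
      by_cases hjN : j = N
      · rw [hjN]
      · rw [hg.r2 i j N hij (by omega) hi he, he]
    · rw [mem_Pur] at h
      exact ⟨h.1, by omega, fun i j hi hij hj he => absurd he (h.2 i (by omega) hi)⟩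

lemma vis_new {f : ℕ → ℕ} :
    Vis (Function.update f N N) (N + 1) = insert N (Vis f N) := by
  ext k
  rw [Finset.mem_insert, mem_Vis, mem_Vis]
  constructor
  · rintro ⟨h1, h2⟩
    by_cases hk : k = N
    · exact Or.inl hk
    · refine Or.inr ⟨by omega, fun i hi hki => ?_⟩
      have := h2 i (by omega) hki
      rwa [upd_lt hi] at this
  · rintro (rfl | ⟨h1, h2⟩)
    · refine ⟨by omega, fun i hi hki => ?_⟩
      have : i = k := by omega
      subst this; simp
    · refine ⟨by omega, fun i hi hki => ?_⟩
      by_cases hiN : i = N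
      · subst hiN; rw [upd_self]; omega
      · rw [upd_lt (by omega)]; exact h2 i (by omega) hki

lemma vis_join {f : ℕ → ℕ} {k : ℕ} (hk : k ∈ Vis f N) :
    Vis (Function.update f N k) (N + 1) = (Vis f N).filter (fun l => l ≤ k) := by
  rw [mem_Vis] at hk
  ext l
  rw [Finset.mem_filter, mem_Vis, mem_Vis]
  constructor
  · rintro ⟨h1, h2⟩
    have h3 := h2 N (by omega) (by omega)
    rw [upd_self] at h3
    refine ⟨⟨by omega, fun i hi hki => ?_⟩, h3⟩
    have := h2 i (by omega) hki
    rwa [upd_lt hi] at this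
  · rintro ⟨⟨h1, h2⟩, h3⟩
    refine ⟨by omega, fun i hi hki => ?_⟩
    by_cases hiN : i = N
    · subst hiN; rw [upd_self]; omega
    · rw [upd_lt (by omega)]; exact h2 i (by omega) hki

lemma pur_upd {f : ℕ → ℕ} {k l : ℕ} (hs : s ≤ N) :
    l ∈ Pur s (Function.update f N k) (N + 1) ↔
      l ∈ Vis (Function.update f N k) (N + 1) ∧ l ≠ k ∧ ∀ i, i < N → s ≤ i → f i ≠ l := by
  rw [mem_Pur]
  apply and_congr Iff.rfl
  constructor
  · intro h
    refine ⟨?_, fun i hi hsi => ?_⟩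
    · have := h N (by omega) hs
      rw [upd_self] at this; exact this.symm
    · have := h i (by omega) hsi
      rwa [upd_lt hi] at this
  · rintro ⟨h1, h2⟩ i hi hsi
    by_cases hiN : i = N
    · subst hiN; rw [upd_self]; exact h1.symm
    · rw [upd_lt (by omega)]; exact h2 i (by omega) hsi

lemma pur_new {f : ℕ → ℕ} (hs : s ≤ N) : Pur s (Function.update f N N) (N + 1) = Pur s f N := by
  ext l
  rw [pur_upd hs, vis_new, Finset.mem_insert, mem_Pur]
  have : l ∈ Vis f N → l ≠ N := fun h => by rw [mem_Vis] at h; omega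
  tauto

lemma pur_top {f : ℕ → ℕ} (hf : f ∈ FF a s (N + 1)) (hs : s ≤ N) :
    Pur s (Function.update f (N + 1) (f N)) (N + 2) = Pur s f (N + 1) := by
  ext l
  rw [pur_upd (by omega), vis_join (top_mem hf), Finset.mem_filter, mem_Pur]
  constructor
  · tauto
  · rintro ⟨h1, h2⟩
    have h3 := mem_Vis.1 h1
    exact ⟨⟨h1, h3.2 N (by omega) (by omega)⟩, (h2 N (by omega) hs).symm, h2⟩

lemma pur_join {f : ℕ → ℕ} {k : ℕ} (hk : k ∈ Vis f N) (hs : s ≤ N) :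
    Pur s (Function.update f N k) (N + 1) = (Pur s f N).filter (fun l => l < k) := by
  ext l
  rw [pur_upd hs, vis_join hk, Finset.mem_filter, Finset.mem_filter, mem_Pur]
  constructor
  · rintro ⟨⟨h1, h2⟩, h3, h4⟩
    exact ⟨⟨h1, h4⟩, by omega⟩
  · rintro ⟨⟨h1, h4⟩, h2⟩
    exact ⟨⟨h1, h2.le⟩, by omega, h4⟩

lemma fixn_new {f : ℕ → ℕ} : fixn (N + 1) (Function.update f N N) = fixn N f + 1 := by
  unfold fixn
  rw [Finset.range_add_one, Finset.filter_insert, if_pos upd_self, Finset.card_insert_of_notMem]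
  · congr 2
    apply Finset.filter_congr
    intro i hi
    rw [upd_lt (Finset.mem_range.1 hi)]
  · simp

lemma fixn_join {f : ℕ → ℕ} {k : ℕ} (hk : k < N) :
    fixn (N + 1) (Function.update f N k) = fixn N f := by
  unfold fixn
  rw [Finset.range_add_one, Finset.filter_insert, if_neg (by rw [upd_self]; omega)]
  congr 1
  apply Finset.filter_congr
  intro i hi
  rw [upd_lt (Finset.mem_range.1 hi)]

lemma sum_lt {R : Type*} [CommRing R] (φ : ℕ → R) (V : Finset ℕ) :
    ∑ k ∈ V, φ (V.filter (fun l => l < k)).card = ∑ j ∈ Finset.range V.card, φ j := by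
  induction V using Finset.induction_on_max with
  | empty => simp
  | insert m V hm ih =>
    have hn : m ∉ V := fun h => lt_irrefl _ (hm m h)
    rw [Finset.sum_insert hn, Finset.card_insert_of_notMem hn, Finset.sum_range_succ, ← ih, add_comm]
    congr 1
    · refine Finset.sum_congr rfl fun k hk => ?_
      rw [Finset.filter_insert, if_neg (by have := hm k hk; omega)]
    · rw [Finset.filter_insert, if_neg (by omega), Finset.filter_true_of_mem hm]

lemma sum_le {R : Type*} [CommRing R] (φ : ℕ → R) (V : Finset ℕ) :
    ∑ k ∈ V, φ (V.filter (fun l => l ≤ k)).card = ∑ j ∈ Finset.range V.card, φ (j + 1) := by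
  rw [← sum_lt (fun j => φ (j + 1))]
  refine Finset.sum_congr rfl fun k hk => ?_
  congr 1
  have : V.filter (fun l => l ≤ k) = insert k (V.filter (fun l => l < k)) := by
    ext l
    simp only [Finset.mem_filter, Finset.mem_insert]
    constructor
    · rintro ⟨h1, h2⟩
      rcases h2.lt_or_eq with h | h
      · exact Or.inr ⟨h1, h⟩
      · exact Or.inl h
    · rintro (rfl | ⟨h1, h2⟩)
      · exact ⟨hk, le_rfl⟩
      · exact ⟨h1, h2.le⟩
  rw [this, Finset.card_insert_of_notMem (by simp)]

section sums
variable {R : Type*} [CommRing R] (t : R)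

/-- Weighted sum with the number of visible blocks as state. -/
noncomputable def WV (a s N : ℕ) (φ : ℕ → R) : R :=
  ∑ f ∈ FF a s N, t ^ fixn N f * φ (Vis f N).card

/-- Weighted sum with the number of pure visible blocks as state. -/
noncomputable def WP (a s N : ℕ) (φ : ℕ → R) : R :=
  ∑ f ∈ FF a s N, t ^ fixn N f * φ (Pur s f N).card

lemma WV_zero (φ : ℕ → R) : WV t a s 0 φ = φ 0 := by
  simp [WV, FF, fixn, Vis]

lemma notMem_Vis {f : ℕ → ℕ} : N ∉ Vis f N := by
  rw [mem_Vis]; omega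

lemma WV_one (φ : ℕ → R) : WV t a s 1 φ = t * φ 1 := by
  unfold WV
  rw [sum_FF_succ]
  have : ∀ f ∈ FF a s 0, ∑ k ∈ allowed a s 0 f, t ^ fixn (0 + 1) (Function.update f 0 k) *
      φ (Vis (Function.update f 0 k) (0 + 1)).card = t * φ 1 := by
    intro f hf
    rw [allowed_zero hf, Finset.sum_singleton, fixn_new, vis_new]
    simp [fixn, Vis]
  rw [Finset.sum_congr rfl this]
  simp [FF]

lemma WV_step1 (has : a ≤ s + 1) (hN : N + 1 < a) (φ : ℕ → R) :
    WV t a s (N + 2) φ = WV t a s (N + 1) (fun v => φ v + t * φ (v + 1)) := by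
  unfold WV
  rw [sum_FF_succ]
  refine Finset.sum_congr rfl fun f hf => ?_
  have hle := (mem_FF.1 hf).1.le N
  have htop := top_mem hf
  rw [allowed_one hf hN has, Finset.sum_pair (by omega), fixn_new, vis_new, fixn_join (by omega),
    vis_join htop, Finset.card_insert_of_notMem notMem_Vis, Finset.filter_true_of_mem]
  · ring
  · intro l hl
    rw [mem_Vis] at hl
    exact hl.2 N (by omega) (by omega)

lemma WV_step2 (haN : a ≤ N) (hs : N ≤ s) (φ : ℕ → R) :
    WV t a s (N + 1) φ =
      WV t a s N (fun v => t * φ (v + 1) + ∑ j ∈ Finset.range v, φ (j + 1)) := by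
  unfold WV
  rw [sum_FF_succ]
  refine Finset.sum_congr rfl fun f hf => ?_
  rw [allowed_two hf haN hs, Finset.sum_insert notMem_Vis, fixn_new, vis_new,
    Finset.card_insert_of_notMem notMem_Vis]
  beta_reduce
  rw [← sum_le, mul_add, Finset.mul_sum]
  congr 1
  · ring
  · refine Finset.sum_congr rfl fun k hk => ?_
    rw [vis_join hk, fixn_join (mem_Vis.1 hk).1]

lemma Pur_self {f : ℕ → ℕ} : Pur s f s = Vis f s := by
  ext k
  rw [mem_Pur]
  exact ⟨fun h => h.1, fun h => ⟨h, fun i h1 h2 => by omega⟩⟩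

lemma WP_first (has : a ≤ s) (φ : ℕ → R) :
    WP t a s (s + 1) φ = WV t a s s (fun v => t * φ v + ∑ j ∈ Finset.range v, φ j) := by
  unfold WP WV
  rw [sum_FF_succ]
  refine Finset.sum_congr rfl fun f hf => ?_
  rw [allowed_two hf has le_rfl, Finset.sum_insert notMem_Vis, fixn_new, pur_new le_rfl,
    Pur_self]
  beta_reduce
  rw [← sum_lt, mul_add, Finset.mul_sum]
  congr 1
  · ring
  · refine Finset.sum_congr rfl fun k hk => ?_
    rw [pur_join hk le_rfl, Pur_self, fixn_join (mem_Vis.1 hk).1]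

lemma WP_step (haN : a ≤ N + 1) (hs : s ≤ N) (φ : ℕ → R) :
    WP t a s (N + 2) φ =
      WP t a s (N + 1) (fun v => (1 + t) * φ v + ∑ j ∈ Finset.range v, φ j) := by
  unfold WP
  rw [sum_FF_succ]
  refine Finset.sum_congr rfl fun f hf => ?_
  have hle := (mem_FF.1 hf).1.le N
  have hn1 : f N ∉ Pur s f (N + 1) := by
    rw [mem_Pur]; rintro ⟨_, h⟩; exact h N (by omega) hs rfl
  have hn2 : N + 1 ∉ insert (f N) (Pur s f (N + 1)) := by
    rw [Finset.mem_insert, mem_Pur, mem_Vis]; omega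
  rw [allowed_three hf haN hs, Finset.sum_insert hn2, Finset.sum_insert hn1, fixn_new,
    pur_new (by omega), pur_top hf hs, fixn_join (by omega)]
  beta_reduce
  rw [← sum_lt, mul_add, Finset.mul_sum, ← add_assoc]
  congr 1
  · ring
  · refine Finset.sum_congr rfl fun k hk => ?_
    have hk' := (mem_Pur.1 hk).1
    rw [pur_join hk' (by omega), fixn_join (mem_Vis.1 hk').1]

lemma WP_conv (φ : ℕ → R) :
    WP t (s + 1) s (s + 1) φ = WV t (s + 1) s (s + 1) (fun v => φ (v - 1)) := by
  unfold WP WV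
  refine Finset.sum_congr rfl fun f hf => ?_
  have : Pur s f (s + 1) = (Vis f (s + 1)).erase (f s) := by
    ext k
    rw [mem_Pur, Finset.mem_erase]
    constructor
    · rintro ⟨h1, h2⟩
      exact ⟨(h2 s (by omega) le_rfl).symm, h1⟩
    · rintro ⟨h1, h2⟩
      refine ⟨h2, fun i hi hsi => ?_⟩
      have : i = s := by omega
      subst this; exact h1.symm
  rw [this, Finset.card_erase_of_mem (top_mem hf)]

end sums

/-! ### Generating functions -/

noncomputable def Ftot (a s N : ℕ) (t : ℚ) : ℚ := ∑ f ∈ FF a s N, t ^ fixn N f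

lemma Ftot_WV (t : ℚ) : Ftot a s N t = WV t a s N (fun _ => 1) := by
  simp [Ftot, WV]

lemma Ftot_WP (t : ℚ) : Ftot a s N t = WP t a s N (fun _ => 1) := by
  simp [Ftot, WP]

lemma WV_eigen {R : Type*} [CommRing R] (t M : R) (k : ℕ) (hk : k + 1 ≤ a) (has : a ≤ s + 1)
    (φ : ℕ → R) (hφ : ∀ v, φ (v + 2) = M * φ (v + 1)) :
    WV t a s (k + 1) φ = t * φ 1 * (1 + t * M) ^ k := by
  induction k generalizing φ with
  | zero => rw [WV_one]; ring
  | succ k ih =>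
    rw [WV_step1 t has (by omega), ih (by omega)]
    · rw [hφ 0]; ring
    · intro v
      rw [hφ, hφ (v + 1), hφ v]; ring

open PowerSeries in
lemma coeff_WV (t : ℚ) (n : ℕ) (Φ : ℕ → ℚ⟦X⟧) :
    coeff n (WV (C t) a s N Φ) = WV t a s N (fun v => coeff n (Φ v)) := by
  unfold WV
  rw [map_sum]
  refine Finset.sum_congr rfl fun f _ => ?_
  rw [← map_pow, coeff_C_mul]

/-- Weights for the generic stage. -/
def gw (t : ℚ) : ℕ → ℕ → ℚ
  | 0, _ => 1
  | n + 1, v => t * gw t n (v + 1) + ∑ j ∈ Finset.range v, gw t n (j + 1)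

/-- Weights for the second collinear stage. -/
def hw (t : ℚ) : ℕ → ℕ → ℚ
  | 0, _ => 1
  | n + 1, v => (1 + t) * hw t n v + ∑ j ∈ Finset.range v, hw t n j

lemma WV_gw (t : ℚ) (n j : ℕ) (hs : a + n ≤ s) :
    WV t a s (a + n) (gw t j) = WV t a s a (gw t (j + n)) := by
  induction n generalizing j with
  | zero => rfl
  | succ n ih =>
    rw [← add_assoc, WV_step2 t (by omega) (by omega)]
    have : (fun v => t * gw t j (v + 1) + ∑ i ∈ Finset.range v, gw t j (i + 1)) = gw t (j + 1) := by
      funext v; rfl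
    rw [this, ih _ (by omega)]
    congr 2; omega

lemma WP_hw (t : ℚ) (n j : ℕ) (has : a ≤ s + 1) :
    WP t a s (s + 1 + n) (hw t j) = WP t a s (s + 1) (hw t (j + n)) := by
  induction n generalizing j with
  | zero => rfl
  | succ n ih =>
    have e : s + 1 + (n + 1) = (s + n) + 2 := by omega
    rw [e, WP_step t (by omega) (by omega)]
    have : (fun v => (1 + t) * hw t j v + ∑ i ∈ Finset.range v, hw t j i) = hw t (j + 1) := by
      funext v; rfl
    have e' : s + n + 1 = s + 1 + n := by omega
    rw [this, e', ih]
    congr 2; omega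

open PowerSeries

noncomputable def Gs (t : ℚ) (v : ℕ) : ℚ⟦X⟧ := PowerSeries.mk (fun n => gw t n v)
noncomputable def Hs (t : ℚ) (v : ℕ) : ℚ⟦X⟧ := PowerSeries.mk (fun n => hw t n v)

lemma Gs_eq (t : ℚ) (v : ℕ) :
    Gs t v = 1 + X * (C t * Gs t (v + 1) + ∑ j ∈ Finset.range v, Gs t (j + 1)) := by
  ext n
  cases n with
  | zero => simp [Gs, gw]
  | succ n =>
    rw [map_add, coeff_succ_X_mul, map_add, coeff_C_mul, map_sum]
    simp [Gs, gw, coeff_one]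

lemma Hs_eq (t : ℚ) (v : ℕ) :
    Hs t v = 1 + X * (C (1 + t) * Hs t v + ∑ j ∈ Finset.range v, Hs t j) := by
  ext n
  cases n with
  | zero => simp [Hs, hw]
  | succ n =>
    rw [map_add, coeff_succ_X_mul, map_add, coeff_C_mul, map_sum]
    simp [Hs, hw, coeff_one]

lemma Gs_D (t : ℚ) (v : ℕ) : Gs t (v + 1) * Gs t 0 = Gs t v * Gs t 1 := by
  set D : ℕ → ℚ⟦X⟧ := fun v => Gs t (v + 1) * Gs t 0 - Gs t v * Gs t 1 with hD
  have hrec0 : ∀ v, D v = Gs t 0 - Gs t 1 + X * Gs t 1 * Gs t 0 +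
      X * (C t * D (v + 1) + ∑ j ∈ Finset.range v, D (j + 1)) := by
    intro v
    have e1 := Gs_eq t (v + 1)
    have e2 := Gs_eq t v
    rw [Finset.sum_range_succ'] at e1
    have e3 : ∑ j ∈ Finset.range v, D (j + 1) =
        (∑ j ∈ Finset.range v, Gs t (j + 1 + 1)) * Gs t 0 -
        (∑ j ∈ Finset.range v, Gs t (j + 1)) * Gs t 1 := by
      rw [Finset.sum_mul, Finset.sum_mul, ← Finset.sum_sub_distrib]
    rw [e3]
    simp only [hD]
    linear_combination (Gs t 0) * e1 - (Gs t 1) * e2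
  have hD0 : D 0 = 0 := by simp only [hD]; ring
  have h1 := hrec0 0
  rw [hD0] at h1
  simp only [Finset.range_zero, Finset.sum_empty, zero_add] at h1
  have hrec : ∀ v, D v = X * (C t * (D (v + 1) - D 1) + ∑ j ∈ Finset.range v, D (j + 1)) := by
    intro v
    linear_combination hrec0 v - h1
  have hz : ∀ n v, coeff n (D v) = 0 := by
    intro n
    induction n with
    | zero => intro v; rw [hrec]; simp
    | succ n ih =>
      intro v
      rw [hrec, coeff_succ_X_mul, map_add, coeff_C_mul, map_sub, map_sum]
      simp [ih]
  have : D v = 0 := by ext n; simp [hz]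
  exact sub_eq_zero.1 this

lemma Gs0_ne (t : ℚ) : Gs t 0 ≠ 0 := by
  intro h
  have := congrArg (coeff 0) h
  simp [Gs, gw] at this

lemma Gs_rels (t : ℚ) : Gs t 0 = 1 + X * C t * Gs t 1 ∧ Gs t 1 = Gs t 0 * (1 + X * Gs t 1) ∧
    ∀ v, Gs t (v + 1) = (1 + X * Gs t 1) * Gs t v := by
  have h0 := Gs_eq t 0
  have h1 := Gs_eq t 1
  have hd := Gs_D t 1
  simp only [Finset.range_zero, Finset.sum_empty, Finset.range_one, Finset.sum_singleton,
    zero_add, add_zero] at h0 h1 hd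
  have e0 : Gs t 0 = 1 + X * C t * Gs t 1 := by rw [h0]; ring
  have e1 : Gs t 1 = Gs t 0 * (1 + X * Gs t 1) := by
    linear_combination (Gs t 0) * h1 - (Gs t 1) * e0 + X * C t * hd
  refine ⟨e0, e1, fun v => ?_⟩
  apply mul_left_cancel₀ (Gs0_ne t)
  have := Gs_D t v
  linear_combination this + (Gs t v) * e1

lemma w_unique {c : ℚ⟦X⟧} {u w : ℚ⟦X⟧} (hu : u = X * (u + c) * (u + 1))
    (hw : w = X * (w + c) * (w + 1)) : u = w := by
  have h : (u - w) * (1 - X * (u + w + 1 + c)) = 0 := by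
    linear_combination hu - hw
  rcases mul_eq_zero.1 h with h | h
  · exact sub_eq_zero.1 h
  · have := congrArg (coeff 0) h
    simp at this

noncomputable def Rs (t : ℚ) (k : ℕ) : ℚ⟦X⟧ := C t * Gs t 1 * (1 + C t * (1 + X * Gs t 1)) ^ k

lemma Ftot_S (k n : ℕ) (hs : k + 1 + n ≤ s) (t : ℚ) :
    Ftot (k + 1) s (k + 1 + n) t = coeff n (Rs t k) := by
  have e : (fun _ : ℕ => (1 : ℚ)) = gw t 0 := by funext v; rfl
  rw [Ftot_WV, e, WV_gw t n 0 hs, Rs, ← WV_eigen (a := k + 1) (s := s) (C t) (1 + X * Gs t 1) k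
    le_rfl (by omega) (Gs t) (fun v => (Gs_rels t).2.2 (v + 1)), coeff_WV]
  congr 1
  funext v
  simp [Gs]

lemma rescale_C' (t c : ℚ) : rescale t (C c : ℚ⟦X⟧) = C c := by
  ext n
  rw [coeff_rescale, coeff_C]
  split_ifs with h
  · simp [h]
  · simp

lemma rescale_X' (t : ℚ) : rescale t (X : ℚ⟦X⟧) = C t * X := by
  ext n
  rw [coeff_rescale, coeff_C_mul, coeff_X]
  split_ifs with h
  · simp [h]
  · simp

lemma C_inv {t : ℚ} (ht : t ≠ 0) : (C t : ℚ⟦X⟧) * C t⁻¹ = 1 := by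
  rw [← map_mul, mul_inv_cancel₀ ht, map_one]

lemma pal_S (k n : ℕ) (hs : k + 1 + n ≤ s) {t : ℚ} (ht : t ≠ 0) :
    Ftot (k + 1) s (k + 1 + n) t = t ^ (k + 1 + n + 1) * Ftot (k + 1) s (k + 1 + n) t⁻¹ := by
  rw [Ftot_S k n hs, Ftot_S k n hs]
  have hti := C_inv ht
  set T : ℚ⟦X⟧ := C t with hT
  set T' : ℚ⟦X⟧ := C t⁻¹ with hT'
  have weq : ∀ t : ℚ, X * C t * Gs t 1 =
      X * (X * C t * Gs t 1 + C t) * (X * C t * Gs t 1 + 1) := by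
    intro t
    obtain ⟨h0, h1, _⟩ := Gs_rels t
    rw [h0] at h1
    linear_combination X * C t * h1
  have w1 := weq t
  have w2 := congrArg (rescale t) (weq t⁻¹)
  simp only [map_mul, map_add, map_one, rescale_C', rescale_X'] at w2
  rw [← hT, ← hT'] at w2
  rw [← hT] at w1
  set g := Gs t 1 with hg
  set g' := rescale t (Gs t⁻¹ 1) with hg'
  have hgg : X * T * g = T * (T * X * T' * g') := by
    refine w_unique (c := T) w1 ?_
    linear_combination T * w2 + T * X * (T * X * T' * g' + 1) * hti
  have hgg2 : T * g = T * (T * T' * g') := by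
    apply mul_left_cancel₀ (X_ne_zero (R := ℚ))
    linear_combination hgg
  have main : Rs t k = T ^ (k + 2) * rescale t (Rs t⁻¹ k) := by
    simp only [Rs, map_mul, map_add, map_one, map_pow, rescale_C', rescale_X']
    rw [← hT, ← hT', ← hg, ← hg']
    have e1 : T * (1 + T' * (1 + T * X * g')) = 1 + T * (1 + X * g) := by
      linear_combination hti - X * hgg2
    calc T * g * (1 + T * (1 + X * g)) ^ k
        = T * (T * T' * g') * (T * (1 + T' * (1 + T * X * g'))) ^ k := by rw [e1, hgg2]
      _ = _ := by rw [mul_pow]; ring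
  rw [main, hT, ← map_pow, coeff_C_mul, coeff_rescale]
  ring

/-! The cone configurations -/

lemma Hs_zero (t : ℚ) : (1 - X * C (1 + t)) * Hs t 0 = 1 := by
  have := Hs_eq t 0
  simp only [Finset.range_zero, Finset.sum_empty, add_zero] at this
  linear_combination this

noncomputable def Mh (t : ℚ) : ℚ⟦X⟧ := (1 - X * C t) * Hs t 0

lemma Hs_succ (t : ℚ) (v : ℕ) : Hs t (v + 1) = Mh t * Hs t v := by
  have h0 := Hs_zero t
  have h1 := Hs_eq t (v + 1)
  have h2 := Hs_eq t v
  rw [Finset.sum_range_succ] at h1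
  have e : (1 - X * C (1 + t)) * Hs t (v + 1) = (1 - X * C t) * Hs t v := by
    have : (C (1 + t) : ℚ⟦X⟧) = 1 + C t := by simp
    rw [this] at h1 h2 ⊢
    linear_combination h1 - h2
  rw [Mh]
  linear_combination (Hs t 0) * e - (Hs t (v + 1)) * h0

lemma rescale_Hs {t : ℚ} (ht : t ≠ 0) : rescale t (Hs t⁻¹ 0) = Hs t 0 := by
  have hti := C_inv ht
  have h1 := Hs_zero t
  have h2 := congrArg (rescale t) (Hs_zero t⁻¹)
  simp only [map_mul, map_sub, map_add, map_one, rescale_C', rescale_X'] at h1 h2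
  linear_combination (Hs t 0) * h2 - (rescale t (Hs t⁻¹ 0)) * h1 + (Hs t 0) * X * (rescale t (Hs t⁻¹ 0)) * hti

lemma rescale_Mh {t : ℚ} (ht : t ≠ 0) : rescale t (Mh t⁻¹) = (1 - X) * Hs t 0 := by
  have hti := C_inv ht
  simp only [Mh, map_mul, map_sub, map_one, rescale_C', rescale_X', rescale_Hs ht]
  linear_combination (- X * Hs t 0) * hti

lemma lin_inv {t : ℚ} (ht : t ≠ 0) :
    C t * (1 + C t⁻¹ * ((1 - X) * Hs t 0)) = 1 + C t * Mh t := by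
  have hti := C_inv ht
  have h1 := Hs_zero t
  simp only [Mh, map_add, map_one] at *
  linear_combination (1 - X) * Hs t 0 * hti + (1 - C t) * h1

noncomputable def Vs (t : ℚ) (k : ℕ) : ℚ⟦X⟧ := C t * Hs t 0 * (1 + C t * Mh t) ^ k

lemma Ftot_V (n : ℕ) (t : ℚ) : Ftot (s + 1) s (s + 1 + n) t = coeff n (Vs t s) := by
  have e : (fun _ : ℕ => (1 : ℚ)) = hw t 0 := by funext v; rfl
  have key := WV_eigen (a := s + 1) (s := s) (C t) (Mh t) s
    le_rfl le_rfl (fun v => Hs t (v - 1)) (fun v => Hs_succ t v)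
  rw [Ftot_WP, e, WP_hw t n 0 le_rfl, WP_conv, Vs]
  simp only [Nat.sub_self] at key
  rw [← key, coeff_WV]
  congr 1
  funext v
  simp [Hs]

lemma pal_V (n : ℕ) {t : ℚ} (ht : t ≠ 0) :
    Ftot (s + 1) s (s + 1 + n) t = t ^ (s + 1 + n + 1) * Ftot (s + 1) s (s + 1 + n) t⁻¹ := by
  rw [Ftot_V, Ftot_V]
  have main : Vs t s = C t ^ (s + 2) * rescale t (Vs t⁻¹ s) := by
    simp only [Vs, map_mul, map_add, map_one, map_pow, rescale_C', rescale_Mh ht, rescale_Hs ht]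
    rw [← lin_inv ht, mul_pow]
    linear_combination (- C t * Hs t 0 * C t ^ s * (1 + C t⁻¹ * ((1 - X) * Hs t 0)) ^ s) * C_inv ht
  rw [main, ← map_pow, coeff_C_mul, coeff_rescale]
  ring

noncomputable def Us (t : ℚ) (k : ℕ) : ℚ⟦X⟧ :=
  C t * ((1 - X) * (Mh t * Hs t 0)) * (1 + C t * Mh t) ^ k

lemma Ftot_U0 (n : ℕ) (t : ℚ) :
    Ftot s s (s + n) t = WV t s s s (fun v => coeff n ((1 - X) * Hs t v)) := by
  have e : (fun _ : ℕ => (1 : ℚ)) = hw t 0 := by funext v; rfl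
  cases n with
  | zero =>
    rw [add_zero, Ftot_WV]
    congr 1
    funext v
    simp [Hs, hw]
  | succ n =>
    have e' : s + (n + 1) = s + 1 + n := by omega
    rw [e', Ftot_WP, e, WP_hw t n 0 (by omega), WP_first t le_rfl, zero_add]
    congr 1
    funext v
    rw [sub_mul, one_mul, map_sub, coeff_succ_X_mul]
    simp only [Hs, coeff_mk, hw]
    ring

lemma pal_U (n : ℕ) (hn : 0 < s + n) {t : ℚ} (ht : t ≠ 0) :
    Ftot s s (s + n) t = t ^ (s + n + 1) * Ftot s s (s + n) t⁻¹ := by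
  rw [Ftot_U0, Ftot_U0]
  cases s with
  | zero =>
    obtain ⟨n, rfl⟩ : ∃ n', n = n' + 1 := ⟨n - 1, by omega⟩
    rw [WV_zero, WV_zero]
    have h : ∀ t : ℚ, coeff (n + 1) ((1 - X) * Hs t 0) = t * coeff n (Hs t 0) := by
      intro t
      have : (1 - X) * Hs t 0 = 1 + X * (C t * Hs t 0) := by
        have := Hs_zero t
        simp only [map_add, map_one] at this
        linear_combination this
      rw [this, map_add, coeff_succ_X_mul, coeff_C_mul, coeff_one]
      simp
    rw [h, h]
    have := congrArg (coeff n) (rescale_Hs ht)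
    rw [coeff_rescale] at this
    rw [← this]
    field_simp
    ring
  | succ s =>
    have key : ∀ t : ℚ, WV t (s + 1) (s + 1) (s + 1) (fun v => coeff n ((1 - X) * Hs t v)) =
        coeff n (Us t s) := by
      intro t
      have key := WV_eigen (a := s + 1) (s := s + 1) (C t) (Mh t) s
        le_rfl (by omega) (fun v => (1 - X) * Hs t v) (fun v => by
          change (1 - X) * Hs t (v + 1 + 1) = _
          rw [Hs_succ]; ring)
      rw [← coeff_WV, key, Us, ← Hs_succ]
    rw [key, key]
    have main : Us t s = C t ^ (s + 2) * rescale t (Us t⁻¹ s) := by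
      simp only [Us, map_mul, map_add, map_sub, map_one, map_pow, rescale_C', rescale_X',
        rescale_Mh ht, rescale_Hs ht]
      rw [← lin_inv ht, mul_pow, Mh]
      linear_combination (- C t * ((1 - X) * ((1 - X * C t) * Hs t 0 * Hs t 0)) * C t ^ s *
        (1 + C t⁻¹ * ((1 - X) * Hs t 0)) ^ s) * C_inv ht
    rw [main, ← map_pow, coeff_C_mul, coeff_rescale]
    ring

/-! ### From palindromic polynomials to rank symmetry -/

lemma coeff_symm (hpal : ∀ t : ℚ, t ≠ 0 → Ftot a s N t = t ^ (N + 1) * Ftot a s N t⁻¹)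
    {j : ℕ} (hj : j ≤ N + 1) :
    ((FF a s N).filter (fun f => fixn N f = j)).card =
      ((FF a s N).filter (fun f => fixn N f = N + 1 - j)).card := by
  have hfix : ∀ f, fixn N f ≤ N := fun f => by
    unfold fixn
    exact (Finset.card_filter_le _ _).trans (by simp)
  let P : Polynomial ℚ := ∑ f ∈ FF a s N, Polynomial.X ^ fixn N f
  let Q : Polynomial ℚ := ∑ f ∈ FF a s N, Polynomial.X ^ (N + 1 - fixn N f)
  have hPQ : P = Q := by
    apply Polynomial.eq_of_infinite_eval_eq
    refine Set.Infinite.mono ?_ (Set.Ioi_infinite (0 : ℚ))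
    intro t ht
    have ht0 : t ≠ 0 := ne_of_gt ht
    change P.eval t = Q.eval t
    have h := hpal t ht0
    simp only [Ftot, Finset.mul_sum] at h
    simp only [P, Q, Polynomial.eval_finsetSum, Polynomial.eval_pow, Polynomial.eval_X]
    rw [h]
    refine Finset.sum_congr rfl fun f _ => ?_
    have h1 : t ^ (N + 1) = t ^ (N + 1 - fixn N f) * t ^ fixn N f := by
      rw [← pow_add]; congr 1; have := hfix f; omega
    rw [h1, inv_pow, mul_assoc, mul_inv_cancel₀ (pow_ne_zero _ ht0), mul_one]
  have h := congrArg (fun p => Polynomial.coeff p j) hPQ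
  simp only [P, Q, Polynomial.finsetSum_coeff, Polynomial.coeff_X_pow, Finset.sum_boole] at h
  have h' := Nat.cast_injective (R := ℚ) h
  have e1 : (FF a s N).filter (fun f => j = fixn N f) = (FF a s N).filter (fun f => fixn N f = j) :=
    Finset.filter_congr fun f _ => eq_comm
  have e2 : (FF a s N).filter (fun f => j = N + 1 - fixn N f) =
      (FF a s N).filter (fun f => fixn N f = N + 1 - j) :=
    Finset.filter_congr fun f _ => by have := hfix f; omega
  rw [e1, e2] at h'
  exact h'

lemma rank_symm (h : Conf p a s N)
    (hpal : 0 < N → ∀ t : ℚ, t ≠ 0 → Ftot a s N t = t ^ (N + 1) * Ftot a s N t⁻¹)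
    {P : Finset ℂ} (hP : P = pset p N) (k : ℕ) (hk : k ≤ P.card - 1) :
    Nat.card {π : NC P // P.card - π.parts.card = k} =
      Nat.card {π : NC P // P.card - π.parts.card = (P.card - 1) - k} := by
  subst hP
  have hcard : (pset p N).card = N := by
    rw [pset, Finset.card_image_of_injOn, Finset.card_range]
    intro i hi j hj hij
    exact h.inj (by simpa using hi) (by simpa using hj) hij
  rcases Nat.eq_zero_or_pos N with h0 | h0
  · have : k = (pset p N).card - 1 - k := by omega
    rw [← this]
  have hle : ∀ π : NC (pset p N), π.parts.card ≤ N := fun π => by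
    have := π.1.card_parts_le_card
    rwa [hcard] at this
  rw [hcard] at hk ⊢
  have e : ∀ i, i ≤ N → Nat.card {π : NC (pset p N) // N - π.parts.card = i} =
      Nat.card {π : NC (pset p N) // π.parts.card = N - i} := by
    intro i hi
    refine Nat.card_congr (Equiv.subtypeEquivRight fun π => ?_)
    have := hle π
    omega
  rw [e k (by omega), e (N - 1 - k) (by omega), card_eq h, card_eq h,
    coeff_symm (hpal h0) (by omega)]
  congr 3
  funext f
  congr 1
  omega

/-! ### The concrete configurations -/

theorem seg_of_ap (A B : ℂ) {i j k : ℕ} (h1 : i < j) (h2 : j < k) :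
    A + (j : ℂ) * B ∈ segment ℝ (A + (i : ℂ) * B) (A + (k : ℂ) * B) := by
  have hi : (i : ℝ) < j := by exact_mod_cast h1
  have hk : (j : ℝ) < k := by exact_mod_cast h2
  have hd : (0 : ℝ) < k - i := by linarith
  rw [segment_eq_image]
  refine ⟨((j : ℝ) - i) / (k - i), ⟨by apply div_nonneg <;> linarith,
    by rw [div_le_one hd]; linarith⟩, ?_⟩
  have hd' : ((k : ℂ) - i) ≠ 0 := by
    have : (((k : ℝ) - i : ℝ) : ℂ) ≠ 0 := by exact_mod_cast hd.ne'
    simpa using this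
  simp only [Complex.real_smul]
  push_cast
  field_simp
  ring

/-- Cone points in counterclockwise order, followed by a far phantom point. -/
noncomputable def conePt (c n N : ℕ) (i : ℕ) : ℂ :=
  if i < N then ⟨((i + c - n : ℕ) : ℝ), ((n - i : ℕ) : ℝ)⟩ else ⟨(N : ℝ) + 1, (N : ℝ) + 1⟩

theorem cone_conf {c a n N : ℕ} (hc : c ≤ 1) (ha : a + c = n + 1) (hN : a ≤ N) :
    Conf (conePt c n N) a n N := by
  have hnN : n ≤ N := by omega
  refine ⟨hN, by omega, ?_, ?_, ?_⟩
  · intro i j k hij hjk hk h1 h2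
    have eI : conePt c n N i = ⟨((i + c - n : ℕ) : ℝ), ((n - i : ℕ) : ℝ)⟩ := if_pos (by omega)
    have eJ : conePt c n N j = ⟨((j + c - n : ℕ) : ℝ), ((n - j : ℕ) : ℝ)⟩ := if_pos (by omega)
    rcases Nat.lt_or_ge k N with hkN | hkN
    · have eK : conePt c n N k = ⟨((k + c - n : ℕ) : ℝ), ((n - k : ℕ) : ℝ)⟩ := if_pos hkN
      rw [eI, eJ, eK]
      have x1 : i + c - n = 0 := by omega
      have x2 : n - k = 0 := by omega
      have y1 : (0 : ℝ) < ((n - i : ℕ) : ℝ) := by exact_mod_cast (by omega : 0 < n - i)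
      have y2 : (0 : ℝ) < ((k + c - n : ℕ) : ℝ) := by exact_mod_cast (by omega : 0 < k + c - n)
      simp only [ori, x1, x2, Nat.cast_zero]
      rcases Nat.lt_or_ge n (j + c) with hj | hj
      · have x3 : n - j = 0 := by omega
        have y3 : ((j + c - n : ℕ) : ℝ) < ((k + c - n : ℕ) : ℝ) := by
          exact_mod_cast (by omega : j + c - n < k + c - n)
        rw [x3, Nat.cast_zero]
        nlinarith [mul_pos y1 (sub_pos.2 y3)]
      · have x3 : j + c - n = 0 := by omega
        have y3 : ((n - j : ℕ) : ℝ) < ((n - i : ℕ) : ℝ) := by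
          exact_mod_cast (by omega : n - j < n - i)
        rw [x3, Nat.cast_zero]
        nlinarith [mul_pos y2 (sub_pos.2 y3)]
    · have eK : conePt c n N k = ⟨(N : ℝ) + 1, (N : ℝ) + 1⟩ := if_neg (by omega)
      rw [eI, eJ, eK]
      have hM : (0 : ℝ) < (N : ℝ) + 1 := by positivity
      simp only [ori]
      rcases Nat.lt_or_ge n (j + c) with hj | hj
      · have x3 : n - j = 0 := by omega
        rcases Nat.lt_or_ge i n with hi | hi
        · have x1 : i + c - n = 0 := by omega
          have y1 : (0 : ℝ) < ((n - i : ℕ) : ℝ) := by exact_mod_cast (by omega : 0 < n - i)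
          have y2 : (0 : ℝ) < ((j + c - n : ℕ) : ℝ) := by
            exact_mod_cast (by omega : 0 < j + c - n)
          have y3 : ((n - i : ℕ) : ℝ) < (N : ℝ) + 1 := by
            exact_mod_cast (by omega : n - i < N + 1)
          rw [x1, x3, Nat.cast_zero]
          nlinarith [mul_pos y1 hM, mul_pos y2 (sub_pos.2 y3)]
        · have x1 : n - i = 0 := by omega
          have y3 : ((i + c - n : ℕ) : ℝ) < ((j + c - n : ℕ) : ℝ) := by
            exact_mod_cast (by omega : i + c - n < j + c - n)
          rw [x1, x3, Nat.cast_zero]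
          nlinarith [mul_pos hM (sub_pos.2 y3)]
      · have x1 : i + c - n = 0 := by omega
        have x3 : j + c - n = 0 := by omega
        have y3 : ((n - j : ℕ) : ℝ) < ((n - i : ℕ) : ℝ) := by
          exact_mod_cast (by omega : n - j < n - i)
        rw [x1, x3, Nat.cast_zero]
        nlinarith [mul_pos hM (sub_pos.2 y3)]
  · intro i j k hij hjk hk
    have key : ∀ l, l < a → conePt c n N l = (n : ℂ) * Complex.I + (l : ℂ) * (-Complex.I) := by
      intro l hl
      have e : conePt c n N l = ⟨((l + c - n : ℕ) : ℝ), ((n - l : ℕ) : ℝ)⟩ := if_pos (by omega)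
      have x1 : l + c - n = 0 := by omega
      rw [e, x1, Nat.cast_sub (by omega)]
      apply Complex.ext <;> simp
      ring
    rw [key i (by omega), key j (by omega), key k hk]
    exact seg_of_ap _ _ hij hjk
  · intro i j k hij hjk hk hi
    have key : ∀ l, n ≤ l → l < N →
        conePt c n N l = ((c : ℂ) - n) + (l : ℂ) * 1 := by
      intro l hl hl2
      have e : conePt c n N l = ⟨((l + c - n : ℕ) : ℝ), ((n - l : ℕ) : ℝ)⟩ := if_pos hl2
      have x1 : n - l = 0 := by omega
      rw [e, x1, Nat.cast_sub (by omega)]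
      apply Complex.ext <;> simp
      ring
    rw [key i hi (by omega), key j (by omega) (by omega), key k (by omega) hk]
    exact seg_of_ap _ _ hij hjk

theorem U_eq (m n : ℕ) : Uconfig m n = pset (conePt 1 n (n + m)) (n + m) := by
  ext z
  simp only [Uconfig, pset, mem_union, mem_image, mem_Icc, mem_range]
  constructor
  · rintro (⟨j, ⟨h1, h2⟩, rfl⟩ | ⟨j, ⟨h1, h2⟩, rfl⟩)
    · refine ⟨n + j - 1, by omega, ?_⟩
      rw [conePt, if_pos (by omega), (by omega : n + j - 1 + 1 - n = j),
        (by omega : n - (n + j - 1) = 0)]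
      apply Complex.ext <;> simp
    · refine ⟨n - j, by omega, ?_⟩
      rw [conePt, if_pos (by omega), (by omega : n - j + 1 - n = 0),
        (by omega : n - (n - j) = j)]
      apply Complex.ext <;> simp
  · rintro ⟨i, hi, rfl⟩
    rcases Nat.lt_or_ge i n with h | h
    · refine Or.inr ⟨n - i, by omega, ?_⟩
      rw [conePt, if_pos hi, (by omega : i + 1 - n = 0)]
      apply Complex.ext <;> simp
    · refine Or.inl ⟨i + 1 - n, by omega, ?_⟩
      rw [conePt, if_pos hi, (by omega : n - i = 0)]
      apply Complex.ext <;> simp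

theorem V_eq (m n : ℕ) : Vconfig m n = pset (conePt 0 n (n + 1 + m)) (n + 1 + m) := by
  ext z
  simp only [Vconfig, Uconfig, pset, mem_insert, mem_union, mem_image, mem_Icc, mem_range]
  constructor
  · rintro (rfl | ⟨j, ⟨h1, h2⟩, rfl⟩ | ⟨j, ⟨h1, h2⟩, rfl⟩)
    · refine ⟨n, by omega, ?_⟩
      rw [conePt, if_pos (by omega)]
      apply Complex.ext <;> simp
    · refine ⟨n + j, by omega, ?_⟩
      rw [conePt, if_pos (by omega), (by omega : n + j + 0 - n = j),
        (by omega : n - (n + j) = 0)]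
      apply Complex.ext <;> simp
    · refine ⟨n - j, by omega, ?_⟩
      rw [conePt, if_pos (by omega), (by omega : n - j + 0 - n = 0),
        (by omega : n - (n - j) = j)]
      apply Complex.ext <;> simp
  · rintro ⟨i, hi, rfl⟩
    rcases Nat.lt_trichotomy i n with h | h | h
    · refine Or.inr (Or.inr ⟨n - i, by omega, ?_⟩)
      rw [conePt, if_pos hi, (by omega : i + 0 - n = 0)]
      apply Complex.ext <;> simp
    · left
      rw [conePt, if_pos hi, h]
      apply Complex.ext <;> simp
    · refine Or.inr (Or.inl ⟨i + 0 - n, by omega, ?_⟩)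
      rw [conePt, if_pos hi, (by omega : n - i = 0)]
      apply Complex.ext <;> simp

/-- Points of the semicircular configuration in counterclockwise order, followed by a
phantom point on the circle. -/
noncomputable def circPt (θ : ℝ) : ℂ := ⟨Real.cos θ, Real.sin θ⟩

noncomputable def semiAng (m n : ℕ) (i : ℕ) : ℝ :=
  if i < m + 2 + n then Real.pi * ((i : ℝ) - (m + 1)) / (n + 1)
  else Real.pi * ((n : ℝ) + 1 / 2) / (n + 1)

noncomputable def semiPt (m n : ℕ) (i : ℕ) : ℂ :=
  if i < m + 2 then ⟨-1 + 2 * (i : ℝ) / (m + 1), 0⟩ else circPt (semiAng m n i)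

theorem ori_arc {α β γ : ℝ} (h0 : 0 < α) (h1 : α < β) (h2 : β < γ) (h3 : γ < Real.pi) :
    0 < ori (circPt α) (circPt β) (circPt γ) := by
  have key : ori (circPt α) (circPt β) (circPt γ) =
      4 * Real.sin ((β - α) / 2) * Real.sin ((γ - β) / 2) * Real.sin ((γ - α) / 2) := by
    have h : ori (circPt α) (circPt β) (circPt γ) =
        Real.sin (β - α) + Real.sin (γ - β) - Real.sin (γ - α) := by
      simp only [ori, circPt, Real.sin_sub]
      ring
    rw [h]
    obtain ⟨u, hu⟩ : ∃ u, u = (β - α) / 2 := ⟨_, rfl⟩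
    obtain ⟨v, hv⟩ : ∃ v, v = (γ - β) / 2 := ⟨_, rfl⟩
    have e1 : β - α = 2 * u := by linarith
    have e2 : γ - β = 2 * v := by linarith
    have e3 : γ - α = 2 * u + 2 * v := by linarith
    have e4 : (γ - α) / 2 = u + v := by linarith
    rw [e4, ← hu, ← hv, e1, e2, e3]
    simp only [Real.sin_add, Real.sin_two_mul, Real.cos_two_mul]
    have p2 := Real.sin_sq_add_cos_sq u
    have p3 := Real.sin_sq_add_cos_sq v
    linear_combination (-4 * Real.sin u * Real.cos u) * p3 - 4 * Real.sin v * Real.cos v * p2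
  rw [key]
  have s1 : 0 < Real.sin ((β - α) / 2) := Real.sin_pos_of_pos_of_lt_pi (by linarith) (by linarith)
  have s2 : 0 < Real.sin ((γ - β) / 2) := Real.sin_pos_of_pos_of_lt_pi (by linarith) (by linarith)
  have s3 : 0 < Real.sin ((γ - α) / 2) := Real.sin_pos_of_pos_of_lt_pi (by linarith) (by linarith)
  positivity

theorem ori_chord {s α β : ℝ} (hs1 : -1 ≤ s) (hs2 : s ≤ 1) (h0 : 0 < α) (h1 : α < β)
    (h3 : β < Real.pi) : 0 < ori ⟨s, 0⟩ (circPt α) (circPt β) := by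
  have key : ori ⟨s, 0⟩ (circPt α) (circPt β) =
      2 * Real.sin ((β - α) / 2) * (Real.cos ((β - α) / 2) - s * Real.cos ((α + β) / 2)) := by
    obtain ⟨u, v, rfl, rfl⟩ : ∃ u v, α = v - u ∧ β = v + u :=
      ⟨(β - α) / 2, (β + α) / 2, by ring, by ring⟩
    have e1 : (v + u - (v - u)) / 2 = u := by ring
    have e2 : (v - u + (v + u)) / 2 = v := by ring
    rw [e1, e2]
    simp only [ori, circPt, Real.sin_add, Real.cos_add, Real.sin_sub, Real.cos_sub]
    have p1 := Real.sin_sq_add_cos_sq v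
    linear_combination (2 * Real.sin u * Real.cos u) * p1
  rw [key]
  have s1 : 0 < Real.sin ((β - α) / 2) := Real.sin_pos_of_pos_of_lt_pi (by linarith) (by linarith)
  have c1 : Real.cos ((α + β) / 2) < Real.cos ((β - α) / 2) :=
    Real.cos_lt_cos_of_nonneg_of_le_pi (by linarith) (by linarith) (by linarith)
  have c2 : -Real.cos ((α + β) / 2) < Real.cos ((β - α) / 2) := by
    rw [← Real.cos_pi_sub]
    exact Real.cos_lt_cos_of_nonneg_of_le_pi (by linarith) (by linarith) (by linarith)
  have c3 : 0 < Real.cos ((β - α) / 2) - s * Real.cos ((α + β) / 2) := by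
    rcases le_total 0 (Real.cos ((α + β) / 2)) with hC | hC
    · nlinarith [mul_nonneg (sub_nonneg.2 hs2) hC]
    · nlinarith [mul_nonneg (by linarith : 0 ≤ s + 1) (neg_nonneg.2 hC)]
  positivity

theorem ori_base {s t α : ℝ} (hst : s < t) (h0 : 0 < α) (h3 : α < Real.pi) :
    0 < ori ⟨s, 0⟩ ⟨t, 0⟩ (circPt α) := by
  have := Real.sin_pos_of_pos_of_lt_pi h0 h3
  simp only [ori, circPt]
  nlinarith [mul_pos (sub_pos.2 hst) this]

theorem semiAng_pos {m n i : ℕ} (h : m + 2 ≤ i) : 0 < semiAng m n i := by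
  have hi : (m : ℝ) + 2 ≤ i := by exact_mod_cast h
  have := Real.pi_pos
  unfold semiAng
  split_ifs
  · have : 0 < (i : ℝ) - (m + 1) := by linarith
    positivity
  · positivity

theorem semiAng_lt_pi {m n i : ℕ} : semiAng m n i < Real.pi := by
  have := Real.pi_pos
  unfold semiAng
  split_ifs with h
  · have hi : (i : ℝ) + 1 ≤ m + 2 + n := by exact_mod_cast h
    rw [div_lt_iff₀ (by positivity)]
    apply mul_lt_mul_of_pos_left _ this
    linarith
  · rw [div_lt_iff₀ (by positivity)]
    apply mul_lt_mul_of_pos_left _ this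
    linarith

theorem semiAng_lt {m n i j : ℕ} (h : i < j) (hj : j ≤ m + 2 + n) :
    semiAng m n i < semiAng m n j := by
  have := Real.pi_pos
  have hij : (i : ℝ) < j := by exact_mod_cast h
  have hi : (i : ℝ) + 1 ≤ m + 2 + n := by exact_mod_cast (by omega : i + 1 ≤ m + 2 + n)
  unfold semiAng
  rw [if_pos (by omega)]
  split_ifs
  · apply div_lt_div_of_pos_right _ (by positivity)
    apply mul_lt_mul_of_pos_left _ this
    linarith
  · apply div_lt_div_of_pos_right _ (by positivity)
    apply mul_lt_mul_of_pos_left _ this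
    linarith

theorem semi_conf (m n : ℕ) : Conf (semiPt m n) (m + 2) (m + 2 + n) (m + 2 + n) := by
  have lo : ∀ l, l < m + 2 → semiPt m n l = ⟨-1 + 2 * (l : ℝ) / (m + 1), 0⟩ :=
    fun l hl => if_pos hl
  have hi : ∀ l, m + 2 ≤ l → semiPt m n l = circPt (semiAng m n l) :=
    fun l hl => if_neg (by omega)
  refine ⟨by omega, by omega, ?_, ?_, ?_⟩
  · intro i j k hij hjk hk h1 _
    have hm : (0 : ℝ) < m + 1 := by positivity
    rw [hi k (by omega)]
    rcases Nat.lt_or_ge i (m + 2) with hi1 | hi1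
    · rw [lo i hi1]
      rcases Nat.lt_or_ge j (m + 2) with hj1 | hj1
      · rw [lo j hj1]
        refine ori_base ?_ (semiAng_pos (by omega)) semiAng_lt_pi
        have hij' : (i : ℝ) < j := by exact_mod_cast hij
        have : 2 * (i : ℝ) / (m + 1) < 2 * (j : ℝ) / (m + 1) :=
          div_lt_div_of_pos_right (by linarith) hm
        linarith
      · rw [hi j hj1]
        refine ori_chord ?_ ?_ (semiAng_pos hj1) (semiAng_lt hjk hk) semiAng_lt_pi
        · have : 0 ≤ 2 * (i : ℝ) / (m + 1) := by positivity
          linarith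
        · have : 2 * (i : ℝ) / (m + 1) ≤ 2 := by
            rw [div_le_iff₀ hm]
            have : (i : ℝ) + 1 ≤ m + 2 := by exact_mod_cast hi1
            linarith
          linarith
    · rw [hi i hi1, hi j (by omega)]
      exact ori_arc (semiAng_pos hi1) (semiAng_lt hij (by omega)) (semiAng_lt hjk hk) semiAng_lt_pi
  · intro i j k hij hjk hk
    have key : ∀ l, l < m + 2 → semiPt m n l = -1 + (l : ℂ) * (2 / ((m : ℂ) + 1)) := by
      intro l hl
      have e : (-1 + (l : ℂ) * (2 / ((m : ℂ) + 1))) =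
          ((-1 + 2 * (l : ℝ) / (m + 1) : ℝ) : ℂ) := by
        push_cast
        ring
      rw [lo l hl, e]
      rfl
    rw [key i (by omega), key j (by omega), key k hk]
    exact seg_of_ap _ _ hij hjk
  · intro i j k hij hjk hk h
    omega

theorem semiPt_lo (m n : ℕ) {i : ℕ} (h : i < m + 2) : semiPt m n i = Sx m i := by
  have e : Sx m i = ((-1 + 2 * (i : ℝ) / (m + 1) : ℝ) : ℂ) := by
    rw [Sx]
    push_cast
    ring
  rw [e, semiPt, if_pos h]
  rfl

theorem semiPt_hi (m n : ℕ) {j : ℕ} (h1 : 1 ≤ j) (h2 : j ≤ n) :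
    semiPt m n (m + 1 + j) = Sy n j := by
  have e : Sy n j = Complex.exp (((Real.pi * j / (n + 1) : ℝ) : ℂ) * Complex.I) := by
    rw [Sy]
    push_cast
    rfl
  have e2 : semiAng m n (m + 1 + j) = Real.pi * j / (n + 1) := by
    rw [semiAng, if_pos (by omega)]
    push_cast
    ring
  rw [e, semiPt, if_neg (by omega), e2, circPt]
  apply Complex.ext
  · simp only [Complex.exp_ofReal_mul_I_re]
  · simp only [Complex.exp_ofReal_mul_I_im]

theorem S_eq (m n : ℕ) : Sconfig m n = pset (semiPt m n) (m + 2 + n) := by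
  ext z
  simp only [Sconfig, pset, mem_union, mem_image, mem_Icc, mem_range]
  constructor
  · rintro (⟨j, h1, rfl⟩ | ⟨j, ⟨h1, h2⟩, rfl⟩)
    · exact ⟨j, by omega, semiPt_lo m n h1⟩
    · exact ⟨m + 1 + j, by omega, semiPt_hi m n h1 h2⟩
  · rintro ⟨i, hi, rfl⟩
    rcases Nat.lt_or_ge i (m + 2) with h | h
    · exact Or.inl ⟨i, h, (semiPt_lo m n h).symm⟩
    · refine Or.inr ⟨i - (m + 1), by omega, ?_⟩
      rw [← semiPt_hi m n (by omega) (by omega), (by omega : m + 1 + (i - (m + 1)) = i)]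

end NCsym

/-- The posets `NC(U_{m,n})`, `NC(V_{m,n})` and `NC(S_{m,n})` are rank-symmetric: for
`ρ(π) = |P| - #blocks(π)` and height `h = |P| - 1`, for every `k ≤ h` the number of
noncrossing partitions of rank `k` equals the number of noncrossing partitions of rank
`h - k`. -/
theorem nc_UVS_rank_symmetric (m n k : ℕ) :
    ((k ≤ (Uconfig m n).card - 1 →
      Nat.card {π : NC (Uconfig m n) // (Uconfig m n).card - π.parts.card = k} =
        Nat.card {π : NC (Uconfig m n) // (Uconfig m n).card - π.parts.card =
          ((Uconfig m n).card - 1) - k})) ∧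
    ((k ≤ (Vconfig m n).card - 1 →
      Nat.card {π : NC (Vconfig m n) // (Vconfig m n).card - π.parts.card = k} =
        Nat.card {π : NC (Vconfig m n) // (Vconfig m n).card - π.parts.card =
          ((Vconfig m n).card - 1) - k})) ∧
    ((k ≤ (Sconfig m n).card - 1 →
      Nat.card {π : NC (Sconfig m n) // (Sconfig m n).card - π.parts.card = k} =
        Nat.card {π : NC (Sconfig m n) // (Sconfig m n).card - π.parts.card =
          ((Sconfig m n).card - 1) - k})) := by
  refine ⟨fun hk => ?_, fun hk => ?_, fun hk => ?_⟩
  · exact NCsym.rank_symm (NCsym.cone_conf (le_refl 1) (a := n) (n := n) (by omega) (by omega))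
      (fun h t ht => NCsym.pal_U m (by omega) ht) (NCsym.U_eq m n) k hk
  · exact NCsym.rank_symm (NCsym.cone_conf (c := 0) (by omega) (a := n + 1) (n := n)
      (by omega) (by omega))
      (fun h t ht => NCsym.pal_V m ht) (NCsym.V_eq m n) k hk
  · exact NCsym.rank_symm (NCsym.semi_conf m n)
      (fun h t ht => NCsym.pal_S (m + 1) n (le_refl _) ht) (NCsym.S_eq m n) k hk
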